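/- Under the algorithmic setting below, the sequence {x^k} generated by the regularized proximal Newton method without line search satisfies liminf_{k→∞} ‖r(x^k)‖ = 0. -/

import Mathlib

open scoped RealInnerProductSpace
open Filter Metric

noncomputable section

/-- The convex subdifferential of `g` at `y`. -/
def subdiff {n : ℕ} (g : EuclideanSpace ℝ (Fin n) → ℝ) (y : EuclideanSpace ℝ (Fin n)) :
    Set (EuclideanSpace ℝ (Fin n)) :=
  {v | ∀ z, g y + ⟪v, z - y⟫ ≤ g z}

/-- The proximity operator `prox_g(z)`, the (unique, for convex `g`) minimizer of
`y ↦ g y + (1/2)‖y − z‖²`. -/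
noncomputable def proxPt {n : ℕ} (g : EuclideanSpace ℝ (Fin n) → ℝ)
    (z : EuclideanSpace ℝ (Fin n)) : EuclideanSpace ℝ (Fin n) :=
  Classical.epsilon fun p => ∀ y, g p + (1 / 2) * ‖p - z‖ ^ 2 ≤ g y + (1 / 2) * ‖y - z‖ ^ 2

/-- The residual (prox-gradient) mapping `r(x) = x − prox_φ(x − ∇f(x))`. -/
noncomputable def resid {n : ℕ} (f φ : EuclideanSpace ℝ (Fin n) → ℝ)
    (x : EuclideanSpace ℝ (Fin n)) : EuclideanSpace ℝ (Fin n) :=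
  x - proxPt φ (x - gradient f x)

/-- The smallest eigenvalue of a symmetric operator on ℝᵐ, as the infimum of its quadratic
form over the unit sphere. -/
noncomputable def lambdaMin {m : ℕ} (T : EuclideanSpace ℝ (Fin m) →L[ℝ] EuclideanSpace ℝ (Fin m)) :
    ℝ :=
  ⨅ u : {u : EuclideanSpace ℝ (Fin m) // ‖u‖ = 1}, ⟪T u.1, u.1⟫

/-!
Suppose the residuals `‖r(xᵏ)‖` stay above some `ε > 0`. Every successful step then decreases
`F = f + φ` by at least a constant multiple of its length, so the iterates have finite length and
converge to some `x₀`.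

Near `x₀` the function `φ` is Lipschitz and the Hessians are bounded, so a large regularization
`μ_k` forces a short step, `‖dᵏ‖ = O(1 / μ_k)`, and the model predicts the decrease of `F` up to
`o(‖dᵏ‖)` while `pred_k` is bounded below by a multiple of `‖dᵏ‖`. Iterations with large `μ_k` are
therefore successful, which keeps `ν_k` bounded. Bounded `ν_k` in turn bounds `‖dᵏ‖` below, because
`‖r(xᵏ)‖ = O((1 + ‖G_k‖) ‖dᵏ‖)`, and it rules out that all late iterations fail. Successful steps
of length bounded below contradict the convergence of `xᵏ`.
-/

open scoped Topology NNReal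

section Convex

variable {V : Type*} [NormedAddCommGroup V]

theorem sub_le_mul_norm_of_convexOn_of_lipschitzOnWith [NormedSpace ℝ V] {φ : V → ℝ}
    (hφ : ConvexOn ℝ Set.univ φ) {K : ℝ≥0} {s : Set V} (hK : LipschitzOnWith K φ s) {x : V}
    (hs : s ∈ 𝓝 x) (y : V) : φ x - φ y ≤ K * ‖y - x‖ := by
  have hnear : ∀ᶠ t in 𝓝[>] (0 : ℝ), AffineMap.lineMap x y t ∈ s :=
    (AffineMap.lineMap_continuous.tendsto' 0 x (AffineMap.lineMap_apply_zero x y)).mono_left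
      nhdsWithin_le_nhds hs
  obtain ⟨t, ht, ht0, ht1⟩ := (hnear.and (Ioo_mem_nhdsGT one_pos)).exists
  have hconv : φ (AffineMap.lineMap x y t) ≤ (1 - t) * φ x + t * φ y := by
    rw [AffineMap.lineMap_apply_module]
    exact hφ.2 trivial trivial (sub_nonneg.2 ht1.le) ht0.le (sub_add_cancel 1 t)
  have hlip : φ x - φ (AffineMap.lineMap x y t) ≤ K * (t * ‖y - x‖) := by
    have := (le_abs_self _).trans (hK.dist_le_mul x (mem_of_mem_nhds hs) _ ht)
    rwa [dist_left_lineMap, Real.norm_of_nonneg ht0.le, dist_comm, dist_eq_norm] at this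
  refine le_of_mul_le_mul_left ?_ ht0
  linarith

theorem exists_eventually_sub_le_mul_norm_of_convexOn [NormedSpace ℝ V] [FiniteDimensional ℝ V]
    {φ : V → ℝ} (hφ : ConvexOn ℝ Set.univ φ) (x₀ : V) :
    ∃ L : ℝ, ∀ᶠ x in 𝓝 x₀, ∀ y, φ x - φ y ≤ L * ‖y - x‖ := by
  obtain ⟨K, s, hs, hK⟩ := hφ.locallyLipschitzOn isOpen_univ (Set.mem_univ x₀)
  rw [nhdsWithin_univ] at hs
  refine ⟨K, ?_⟩
  filter_upwards [eventually_mem_nhds_iff.2 hs] with x hx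
  exact sub_le_mul_norm_of_convexOn_of_lipschitzOnWith hφ hK hx

theorem exists_forall_add_half_norm_sq_le_of_convexOn [NormedSpace ℝ V] [FiniteDimensional ℝ V]
    {φ : V → ℝ} (hφ : ConvexOn ℝ Set.univ φ) (z : V) :
    ∃ p, ∀ y, φ p + (1 / 2) * ‖p - z‖ ^ 2 ≤ φ y + (1 / 2) * ‖y - z‖ ^ 2 := by
  have : ProperSpace V := FiniteDimensional.proper ℝ V
  have hφc : Continuous φ := continuousOn_univ.1 (hφ.continuousOn isOpen_univ)
  obtain ⟨L, hL⟩ := exists_eventually_sub_le_mul_norm_of_convexOn hφ z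
  refine Continuous.exists_forall_le' (f := fun p => φ p + (1 / 2) * ‖p - z‖ ^ 2) (by fun_prop) z ?_
  filter_upwards [(tendsto_dist_right_cocompact_atTop z).eventually_ge_atTop (2 * L)] with y hy
  rw [dist_eq_norm] at hy
  rw [sub_self, norm_zero]
  nlinarith [hL.self_of_nhds y, norm_nonneg (y - z)]

theorem add_inner_le_of_forall_add_half_norm_sq_le [InnerProductSpace ℝ V] {φ : V → ℝ}
    (hφ : ConvexOn ℝ Set.univ φ) {p z : V}
    (hp : ∀ y, φ p + (1 / 2) * ‖p - z‖ ^ 2 ≤ φ y + (1 / 2) * ‖y - z‖ ^ 2) (y : V) :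
    φ p + ⟪z - p, y - p⟫ ≤ φ y := by
  suffices h : φ p + ⟪z - p, y - p⟫ - φ y ≤ 0 by linarith
  have hlim : Tendsto (fun t : ℝ => t * (‖y - p‖ ^ 2 / 2)) (𝓝[>] 0) (𝓝 0) :=
    ((continuous_mul_const _).tendsto' 0 0 (zero_mul _)).mono_left nhdsWithin_le_nhds
  refine ge_of_tendsto hlim ?_
  filter_upwards [Ioo_mem_nhdsGT one_pos] with t ⟨ht0, ht1⟩
  have hconv : φ ((1 - t) • p + t • y) ≤ (1 - t) * φ p + t * φ y :=
    hφ.2 trivial trivial (sub_nonneg.2 ht1.le) ht0.le (sub_add_cancel 1 t)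
  have hsq : ‖(1 - t) • p + t • y - z‖ ^ 2
      = ‖p - z‖ ^ 2 - 2 * t * ⟪z - p, y - p⟫ + t ^ 2 * ‖y - p‖ ^ 2 := by
    rw [show (1 - t) • p + t • y - z = t • (y - p) - (z - p) by module, norm_sub_sq_real,
      real_inner_smul_left, real_inner_comm, norm_smul, mul_pow, Real.norm_eq_abs, sq_abs,
      norm_sub_rev z p]
    ring
  refine le_of_mul_le_mul_left ?_ ht0
  linarith [hp ((1 - t) • p + t • y)]

end Convex

section Prox

variable {n : ℕ} {φ : EuclideanSpace ℝ (Fin n) → ℝ}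

theorem add_inner_proxPt_le (hφ : ConvexOn ℝ Set.univ φ) (z y : EuclideanSpace ℝ (Fin n)) :
    φ (proxPt φ z) + ⟪z - proxPt φ z, y - proxPt φ z⟫ ≤ φ y :=
  add_inner_le_of_forall_add_half_norm_sq_le hφ
    (Classical.epsilon_spec (exists_forall_add_half_norm_sq_le_of_convexOn hφ z)) y

theorem norm_proxPt_sub_proxPt_le (hφ : ConvexOn ℝ Set.univ φ) (z w : EuclideanSpace ℝ (Fin n)) :
    ‖proxPt φ z - proxPt φ w‖ ≤ ‖z - w‖ := by
  set p := proxPt φ z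
  set q := proxPt φ w
  have hmono : ‖p - q‖ ^ 2 ≤ ⟪z - w, p - q⟫ := by
    have hp : φ p + ⟪z - p, q - p⟫ ≤ φ q := add_inner_proxPt_le hφ z q
    have hq : φ q + ⟪w - q, p - q⟫ ≤ φ p := add_inner_proxPt_le hφ w p
    have hsum : ⟪z - p, q - p⟫ + ⟪w - q, p - q⟫ = ‖p - q‖ ^ 2 - ⟪z - w, p - q⟫ := by
      rw [← real_inner_self_eq_norm_sq]
      simp only [inner_sub_left, inner_sub_right]
      ring
    linarith
  have hcs : ‖p - q‖ * ‖p - q‖ ≤ ‖z - w‖ * ‖p - q‖ :=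
    (sq ‖p - q‖).symm.trans_le (hmono.trans (real_inner_le_norm _ _))
  rcases (norm_nonneg (p - q)).eq_or_lt with h | h
  · exact h ▸ norm_nonneg _
  · exact le_of_mul_le_mul_right hcs h

end Prox

section Hilbert

variable {V W : Type*} [NormedAddCommGroup V] [InnerProductSpace ℝ V] [CompleteSpace V]
  [NormedAddCommGroup W] [InnerProductSpace ℝ W] [CompleteSpace W]

theorem contDiff_gradient {k l : WithTop ℕ∞} {f : V → ℝ} (hf : ContDiff ℝ l f) (hkl : k + 1 ≤ l) :
    ContDiff ℝ k (gradient f) :=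
  (InnerProductSpace.toDual ℝ V).symm.contDiff.comp (hf.fderiv_right hkl)

theorem continuous_gradient {f : V → ℝ} (hf : ContDiff ℝ 2 f) : Continuous (gradient f) :=
  (contDiff_gradient (k := 1) hf one_add_one_eq_two.le).continuous

theorem continuous_fderiv_gradient {f : V → ℝ} (hf : ContDiff ℝ 2 f) :
    Continuous (fderiv ℝ (gradient f)) :=
  (contDiff_gradient hf one_add_one_eq_two.le).continuous_fderiv one_ne_zero

theorem gradient_comp_sub {ψ : W → ℝ} (A : V →L[ℝ] W) (b : W) {y : V}
    (hψ : DifferentiableAt ℝ ψ (A y - b)) :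
    gradient (fun y => ψ (A y - b)) y = ContinuousLinearMap.adjoint A (gradient ψ (A y - b)) := by
  have hcomp : HasFDerivAt (fun y => ψ (A y - b)) ((fderiv ℝ ψ (A y - b)).comp A) y :=
    hψ.hasFDerivAt.comp y (A.hasFDerivAt.sub_const b)
  refine ext_inner_right ℝ fun v => ?_
  rw [ContinuousLinearMap.adjoint_inner_left, inner_gradient_left, inner_gradient_left,
    hcomp.fderiv, ContinuousLinearMap.comp_apply]

theorem fderiv_gradient_comp_sub {ψ : W → ℝ} (hψ : ContDiff ℝ 2 ψ) (A : V →L[ℝ] W) (b : W) (y : V) :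
    fderiv ℝ (gradient fun y => ψ (A y - b)) y =
      (ContinuousLinearMap.adjoint A).comp ((fderiv ℝ (gradient ψ) (A y - b)).comp A) := by
  have hgrad : gradient (fun y => ψ (A y - b)) =
      fun y => ContinuousLinearMap.adjoint A (gradient ψ (A y - b)) :=
    funext fun y => gradient_comp_sub A b (hψ.differentiable two_ne_zero _)
  have hinner : HasFDerivAt (fun y => gradient ψ (A y - b))
      ((fderiv ℝ (gradient ψ) (A y - b)).comp A) y :=
    ((contDiff_gradient hψ one_add_one_eq_two.le).differentiable one_ne_zero _).hasFDerivAt.comp y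
      (A.hasFDerivAt.sub_const b)
  rw [hgrad]
  exact ((ContinuousLinearMap.adjoint A).hasFDerivAt.comp y hinner).fderiv

theorem inner_smul_adjoint_comp_self (A : V →L[ℝ] W) (c : ℝ) (v : V) :
    ⟪v, (c • (ContinuousLinearMap.adjoint A).comp A) v⟫ = c * ‖A v‖ ^ 2 := by
  rw [smul_apply, ContinuousLinearMap.comp_apply, real_inner_smul_right,
    ContinuousLinearMap.adjoint_inner_right, real_inner_self_eq_norm_sq]

end Hilbert

section LambdaMin

theorem neg_norm_le_inner_apply_self {V : Type*} [NormedAddCommGroup V] [InnerProductSpace ℝ V]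
    (T : V →L[ℝ] V) {u : V} (hu : ‖u‖ = 1) :
    -‖T‖ ≤ ⟪T u, u⟫ := by
  refine (neg_le_neg ?_).trans (neg_le_of_abs_le (abs_real_inner_le_norm (T u) u))
  simpa [hu] using T.le_opNorm u

variable {m : ℕ} (T : EuclideanSpace ℝ (Fin m) →L[ℝ] EuclideanSpace ℝ (Fin m))

theorem neg_norm_le_lambdaMin : -‖T‖ ≤ lambdaMin T := by
  rcases isEmpty_or_nonempty {u : EuclideanSpace ℝ (Fin m) // ‖u‖ = 1} with h | h
  · rw [lambdaMin, Real.iInf_of_isEmpty]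
    exact neg_nonpos.2 (norm_nonneg T)
  · exact le_ciInf fun u => neg_norm_le_inner_apply_self T u.2

theorem lambdaMin_mul_norm_sq_le (u : EuclideanSpace ℝ (Fin m)) :
    lambdaMin T * ‖u‖ ^ 2 ≤ ⟪T u, u⟫ := by
  rcases eq_or_ne u 0 with rfl | hu
  · simp
  have hbdd : BddBelow (Set.range fun v : {v : EuclideanSpace ℝ (Fin m) // ‖v‖ = 1} => ⟪T v, v⟫) :=
    ⟨-‖T‖, Set.forall_mem_range.2 fun v => neg_norm_le_inner_apply_self T v.2⟩
  have hunit : lambdaMin T ≤ ⟪T (‖u‖⁻¹ • u), ‖u‖⁻¹ • u⟫ :=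
    ciInf_le hbdd ⟨‖u‖⁻¹ • u, norm_smul_inv_norm (𝕜 := ℝ) hu⟩
  rw [map_smul, real_inner_smul_left, real_inner_smul_right] at hunit
  calc lambdaMin T * ‖u‖ ^ 2 ≤ ‖u‖⁻¹ * (‖u‖⁻¹ * ⟪T u, u⟫) * ‖u‖ ^ 2 := by gcongr
    _ = ⟪T u, u⟫ := by field_simp

theorem norm_mul_max_neg_lambdaMin_le {a : ℝ} (ha : 0 ≤ a) :
    ‖a * max (-lambdaMin T) 0‖ ≤ a * ‖T‖ := by
  rw [Real.norm_of_nonneg (mul_nonneg ha (le_max_right _ _))]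
  exact mul_le_mul_of_nonneg_left
    (max_le (neg_le.1 (neg_norm_le_lambdaMin T)) (norm_nonneg T)) ha

theorem inner_adjoint_comp_add_smul_nonneg {V : Type*} [NormedAddCommGroup V]
    [InnerProductSpace ℝ V] [CompleteSpace V] (A : V →L[ℝ] EuclideanSpace ℝ (Fin m)) {c : ℝ}
    (hc : -lambdaMin T ≤ c) (v : V) :
    0 ≤ ⟪v, ((ContinuousLinearMap.adjoint A).comp (T.comp A) +
      c • (ContinuousLinearMap.adjoint A).comp A) v⟫ := by
  rw [add_apply, inner_add_right, inner_smul_adjoint_comp_self, ContinuousLinearMap.comp_apply,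
    ContinuousLinearMap.adjoint_inner_right, ContinuousLinearMap.comp_apply, real_inner_comm]
  linarith [lambdaMin_mul_norm_sq_le T (A v), mul_le_mul_of_nonneg_right hc (sq_nonneg ‖A v‖)]

theorem exists_continuous_norm_smul_adjoint_comp_self_le {V : Type*} [NormedAddCommGroup V]
    [InnerProductSpace ℝ V] [CompleteSpace V] {ψ : EuclideanSpace ℝ (Fin m) → ℝ}
    (hψ : ContDiff ℝ 2 ψ) (A : V →L[ℝ] EuclideanSpace ℝ (Fin m)) (b : EuclideanSpace ℝ (Fin m))
    {a : ℝ} (ha : 0 ≤ a) :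
    ∃ g : V → ℝ, Continuous g ∧ ∀ y,
      ‖(a * max (-lambdaMin (fderiv ℝ (gradient ψ) (A y - b))) 0) •
        (ContinuousLinearMap.adjoint A).comp A‖ ≤ g y := by
  refine ⟨fun y => a * ‖fderiv ℝ (gradient ψ) (A y - b)‖ * ‖(ContinuousLinearMap.adjoint A).comp A‖,
    ?_, fun y => ?_⟩
  · have hhess : Continuous fun y => fderiv ℝ (gradient ψ) (A y - b) :=
      (continuous_fderiv_gradient hψ).comp (A.continuous.sub continuous_const)
    exact (hhess.norm.const_mul a).mul_const _
  · rw [norm_smul]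
    exact mul_le_mul_of_nonneg_right (norm_mul_max_neg_lambdaMin_le _ ha) (norm_nonneg _)

end LambdaMin

section Asymptotics

open Asymptotics

variable {ι V : Type*} [NormedAddCommGroup V] [InnerProductSpace ℝ V] {l : Filter ι}

theorem isLittleO_inner_apply_self {B : ι → V →L[ℝ] V} {d : ι → V}
    (hB : IsBoundedUnder (· ≤ ·) l fun k => ‖B k‖) (hd : Tendsto d l (𝓝 0)) :
    (fun k => ⟪d k, B k (d k)⟫) =o[l] d := by
  have hbound : (fun k => ⟪d k, B k (d k)⟫) =O[l] fun k => ‖d k‖ * ‖B k‖ * ‖d k‖ :=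
    .of_norm_le fun k => (norm_inner_le_norm _ _).trans <| by
      rw [mul_assoc]
      gcongr
      exact (B k).le_opNorm _
  have hB' : (fun k => ‖B k‖) =O[l] fun _ => (1 : ℝ) := (hB.isBigO_one ℝ).norm_left
  have hd' : (fun k => ‖d k‖) =o[l] fun _ => (1 : ℝ) := ((isLittleO_one_iff ℝ).2 hd).norm_left
  refine hbound.trans_isLittleO ?_
  simpa using ((hd'.mul_isBigO hB').mul_isBigO (isBigO_refl (fun k => ‖d k‖) l)).norm_right

variable [CompleteSpace V]

theorem isLittleO_sub_sub_inner_gradient {f : V → ℝ} {x₀ : V} (hf : ContDiffAt ℝ 1 f x₀)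
    {x y : ι → V} (hx : Tendsto x l (𝓝 x₀)) (hy : Tendsto y l (𝓝 x₀)) :
    (fun k => f (y k) - f (x k) - ⟪gradient f (x k), y k - x k⟫) =o[l] fun k => y k - x k := by
  have hstrict : (fun k => f (y k) - f (x k) - fderiv ℝ f x₀ (y k - x k)) =o[l]
      fun k => y k - x k :=
    (hf.hasStrictFDerivAt one_ne_zero).isLittleO.comp_tendsto (hy.prodMk_nhds hx)
  have hfderiv : (fun k => fderiv ℝ f x₀ - fderiv ℝ f (x k)) =o[l] fun _ => (1 : ℝ) := by
    have hcont : ContinuousAt (fderiv ℝ f) x₀ := (hf.fderiv_right (m := 0) le_rfl).continuousAt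
    rw [isLittleO_one_iff, ← sub_self (fderiv ℝ f x₀)]
    exact tendsto_const_nhds.sub (hcont.tendsto.comp hx)
  have hgrad : (fun k => (fderiv ℝ f x₀ - fderiv ℝ f (x k)) (y k - x k)) =o[l]
      fun k => y k - x k := by
    have hbound : (fun k => (fderiv ℝ f x₀ - fderiv ℝ f (x k)) (y k - x k)) =O[l]
        fun k => ‖fderiv ℝ f x₀ - fderiv ℝ f (x k)‖ * ‖y k - x k‖ :=
      .of_norm_le fun k => ContinuousLinearMap.le_opNorm _ _
    refine hbound.trans_isLittleO ?_
    simpa using (hfderiv.norm_left.mul_isBigO (isBigO_refl (fun k => ‖y k - x k‖) l)).norm_right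
  refine (hstrict.add hgrad).congr_left fun k => ?_
  rw [inner_gradient_left, sub_apply]
  ring

end Asymptotics

section Model

/-- The decrease `φ(x) − φ(y) − ⟪∇f(x), y − x⟫ − ½⟪y − x, B(y − x)⟫` of the quadratic model of
`f + φ` at `x` with Hessian `B` between `x` and `y`. It is `F(xᵏ) − q_k(y)` for `B = ∇²f(xᵏ)` and
`F(xᵏ) − q̂_k(y)` for `B = G_k`. -/
def modelDecrease {V : Type*} [NormedAddCommGroup V] [InnerProductSpace ℝ V] [CompleteSpace V]
    (f φ : V → ℝ) (B : V →L[ℝ] V) (x y : V) : ℝ :=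
  φ x - φ y - ⟪gradient f x, y - x⟫ - 1 / 2 * ⟪y - x, B (y - x)⟫

/-- The prox-gradient residual at `y` of the quadratic model of `f + φ` at `x` with Hessian `B`;
it is `R_k(y)` for `B = G_k`. -/
def modelResid {n : ℕ} (f φ : EuclideanSpace ℝ (Fin n) → ℝ)
    (B : EuclideanSpace ℝ (Fin n) →L[ℝ] EuclideanSpace ℝ (Fin n))
    (x y : EuclideanSpace ℝ (Fin n)) : EuclideanSpace ℝ (Fin n) :=
  y - proxPt φ (y - gradient f x - B (y - x))

variable {V : Type*} [NormedAddCommGroup V] [InnerProductSpace ℝ V] [CompleteSpace V]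

theorem modelDecrease_eq_add (f φ : V → ℝ) (B C : V →L[ℝ] V) (x y : V) :
    modelDecrease f φ B x y =
      modelDecrease f φ (B + C) x y + 1 / 2 * ⟪y - x, C (y - x)⟫ := by
  simp only [modelDecrease, add_apply, inner_add_right]
  ring

theorem isLittleO_sub_modelDecrease {ι : Type*} {l : Filter ι} {f : V → ℝ} (hf : ContDiff ℝ 2 f)
    (φ : V → ℝ) {x y : ι → V} {x₀ : V} (hx : Tendsto x l (𝓝 x₀)) (hy : Tendsto y l (𝓝 x₀)) :
    (fun k => f (x k) + φ (x k) - (f (y k) + φ (y k)) -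
      modelDecrease f φ (fderiv ℝ (gradient f) (x k)) (x k) (y k)) =o[l] fun k => y k - x k := by
  have hdiff : Tendsto (fun k => y k - x k) l (𝓝 0) := sub_self x₀ ▸ hy.sub hx
  have hhess : IsBoundedUnder (· ≤ ·) l fun k => ‖fderiv ℝ (gradient f) (x k)‖ :=
    (((continuous_fderiv_gradient hf).tendsto x₀).comp hx).norm.isBoundedUnder_le
  have hfirst := isLittleO_sub_sub_inner_gradient (hf.contDiffAt.of_le one_le_two) hx hy
  have hsecond := (isLittleO_inner_apply_self hhess hdiff).const_mul_left (1 / 2)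
  refine (hsecond.sub hfirst).congr_left fun k => ?_
  rw [modelDecrease]
  ring

theorem norm_resid_le_norm_modelResid_add {n : ℕ} {f φ : EuclideanSpace ℝ (Fin n) → ℝ}
    (hφ : ConvexOn ℝ Set.univ φ) (B : EuclideanSpace ℝ (Fin n) →L[ℝ] EuclideanSpace ℝ (Fin n))
    (x y : EuclideanSpace ℝ (Fin n)) :
    ‖resid f φ x‖ ≤ ‖modelResid f φ B x y‖ + (2 + ‖B‖) * ‖y - x‖ := by
  set z := x - gradient f x
  set w := y - gradient f x - B (y - x)
  have hsplit : resid f φ x = modelResid f φ B x y - (y - x) - (proxPt φ z - proxPt φ w) := by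
    rw [resid, modelResid]
    abel
  have hprox : ‖proxPt φ z - proxPt φ w‖ ≤ ‖B‖ * ‖y - x‖ + ‖y - x‖ := by
    refine (norm_proxPt_sub_proxPt_le hφ z w).trans ?_
    rw [show z - w = B (y - x) - (y - x) by simp only [z, w]; abel]
    exact (norm_sub_le _ _).trans (add_le_add_left (B.le_opNorm _) _)
  calc ‖resid f φ x‖
      ≤ ‖modelResid f φ B x y‖ + ‖y - x‖ + ‖proxPt φ z - proxPt φ w‖ :=
        hsplit ▸ (norm_sub_le _ _).trans (add_le_add_left (norm_sub_le _ _) _)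
    _ ≤ ‖modelResid f φ B x y‖ + (2 + ‖B‖) * ‖y - x‖ := by linarith

end Model

section Sequences

theorem summable_dist_of_mul_dist_le_sub {X : Type*} [PseudoMetricSpace X] {x : ℕ → X} {u : ℕ → ℝ}
    {C : ℝ} (hC : 0 < C) (hu : BddBelow (Set.range u))
    (h : ∀ k, C * dist (x k) (x (k + 1)) ≤ u k - u (k + 1)) :
    Summable fun k => dist (x k) (x (k + 1)) := by
  obtain ⟨b, hb⟩ := hu
  refine summable_of_sum_range_le (c := (u 0 - b) / C) (fun _ => dist_nonneg) fun N => ?_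
  rw [le_div_iff₀' hC, Finset.mul_sum]
  calc ∑ k ∈ Finset.range N, C * dist (x k) (x (k + 1))
      ≤ ∑ k ∈ Finset.range N, (u k - u (k + 1)) := Finset.sum_le_sum fun k _ => h k
    _ = u 0 - u N := Finset.sum_range_sub' u N
    _ ≤ u 0 - b := sub_le_sub_left (hb ⟨N, rfl⟩) _

theorem tendsto_atTop_of_eventually_mul_le {u : ℕ → ℝ} {σ : ℝ} (hσ : 1 < σ) (hpos : ∀ k, 0 < u k)
    (h : ∀ᶠ k in atTop, σ * u k ≤ u (k + 1)) : Tendsto u atTop atTop := by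
  obtain ⟨N, hN⟩ := eventually_atTop.1 h
  refine (tendsto_add_atTop_iff_nat N).1 (tendsto_atTop_of_geom_le (hpos _) hσ fun k => ?_)
  rw [add_right_comm]
  exact hN _ (Nat.le_add_left N k)

theorem exists_pos_forall_le_of_eventually_le {u : ℕ → ℝ} (hpos : ∀ k, 0 < u k) {ε : ℝ}
    (hε : 0 < ε) (h : ∀ᶠ k in atTop, ε ≤ u k) : ∃ ε' > 0, ∀ k, ε' ≤ u k := by
  have hinv : IsBoundedUnder (· ≤ ·) atTop fun k => (u k)⁻¹ :=
    isBoundedUnder_of_eventually_le (h.mono fun k hk => inv_anti₀ hε hk)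
  obtain ⟨C, hC⟩ := hinv.bddAbove_range
  have hle : ∀ k, (u k)⁻¹ ≤ C := fun k => hC ⟨k, rfl⟩
  have hCpos : 0 < C := (inv_pos.2 (hpos 0)).trans_le (hle 0)
  exact ⟨C⁻¹, inv_pos.2 hCpos, fun k => inv_le_of_inv_le₀ (hpos k) (hle k)⟩

theorem liminf_eq_zero_of_frequently_lt {ι : Type*} {l : Filter ι} {u : ι → ℝ}
    (hu : ∀ k, 0 ≤ u k) (h : ∀ ε > 0, ∃ᶠ k in l, u k < ε) : liminf u l = 0 := by
  have hbdd : IsBoundedUnder (· ≥ ·) l u := isBoundedUnder_of ⟨0, hu⟩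
  have hcobdd : IsCoboundedUnder (· ≥ ·) l u :=
    .of_frequently_le ((h 1 one_pos).mono fun _ => le_of_lt)
  refine le_antisymm (le_of_forall_pos_le_add fun ε hε => ?_)
    (le_liminf_of_le hcobdd (.of_forall hu))
  rw [zero_add]
  exact liminf_le_of_frequently_le ((h ε hε).mono fun _ => le_of_lt) hbdd

end Sequences

section ParameterUpdates

theorem eq_or_eq_and_le_of_update {η r r' s : ℝ} (hη : 0 < η) (hη' : η ≤ 1) (hs : 0 ≤ s)
    (h : (s ≤ η * r → r' = s) ∧ (¬s ≤ η * r → r' = r)) : r' = r ∨ r' = s ∧ r' ≤ r := by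
  by_cases hsr : s ≤ η * r
  · have hr : 0 ≤ r := (mul_nonneg_iff_of_pos_left hη).1 (hs.trans hsr)
    exact .inr ⟨h.1 hsr, (h.1 hsr).trans_le (hsr.trans (mul_le_of_le_one_left hr hη'))⟩
  · exact .inl (h.2 hsr)

theorem min_le_and_le_of_update {c₂ σ₁ ρ ν ν' νmin νbar : ℝ} (hν : νmin ≤ νbar)
    (h : (ρ ≤ c₂ → ν' = min ν νbar) ∧ (c₂ < ρ → ν' = min (max (σ₁ * ν) νmin) νbar)) :
    min ν νmin ≤ ν' ∧ ν' ≤ νbar := by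
  rcases le_or_gt ρ c₂ with hρ | hρ
  · exact h.1 hρ ▸ ⟨min_le_min_left ν hν, min_le_right _ _⟩
  · exact h.2 hρ ▸
      ⟨(min_le_right _ _).trans (le_min (le_max_right _ _) hν), min_le_right _ _⟩

end ParameterUpdates

/-- A run of the regularized proximal Newton method without line search for `f + φ`, in the
paper's notation. Two features of the method are left open: the modification `P k` of the Hessian
(the paper's `Λ_k AᵀA`) is any positive semidefinite one for which `∇²f(xᵏ) + P k` is positive
semidefinite and which is bounded in terms of `xᵏ`, and a successful iteration may move `ν`
anywhere between `min ν νmin` and `νbar`. -/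
structure RegProxNewtonRun {n : ℕ} (f φ : EuclideanSpace ℝ (Fin n) → ℝ) where
  (c₁ σ₂ θ α νmin νbar δ pmin κ : ℝ)
  (x xhat : ℕ → EuclideanSpace ℝ (Fin n))
  (ν rbar μ pred : ℕ → ℝ)
  (P G : ℕ → EuclideanSpace ℝ (Fin n) →L[ℝ] EuclideanSpace ℝ (Fin n))
  Successful : ℕ → Prop
  c₁_pos : 0 < c₁
  c₁_lt_one : c₁ < 1
  one_lt_σ₂ : 1 < σ₂
  θ_lt_one : θ < 1
  α_nonneg : 0 ≤ α
  νmin_pos : 0 < νmin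
  δ_nonneg : 0 ≤ δ
  pmin_pos : 0 < pmin
  pmin_lt_half : pmin < 1 / 2
  κ_nonneg : 0 ≤ κ
  ν_zero_pos : 0 < ν 0
  rbar_zero : rbar 0 = ‖resid f φ (x 0)‖
  rbar_succ : ∀ k, rbar (k + 1) = rbar k ∨
    rbar (k + 1) = ‖resid f φ (x (k + 1))‖ ∧ rbar (k + 1) ≤ rbar k
  μ_eq : ∀ k, μ k = ν k * rbar k ^ δ
  G_eq : ∀ k, G k = fderiv ℝ (gradient f) (x k) + P k +
    μ k • ContinuousLinearMap.id ℝ (EuclideanSpace ℝ (Fin n))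
  inner_P_nonneg : ∀ k v, 0 ≤ ⟪v, P k v⟫
  inner_hessian_add_P_nonneg : ∀ k v, 0 ≤ ⟪v, (fderiv ℝ (gradient f) (x k) + P k) v⟫
  exists_continuous_norm_P_le :
    ∃ g : EuclideanSpace ℝ (Fin n) → ℝ, Continuous g ∧ ∀ k, ‖P k‖ ≤ g (x k)
  norm_modelResid_le : ∀ k, ‖modelResid f φ (G k) (x k) (xhat k)‖ ≤ θ * ‖resid f φ (x k)‖
  le_modelDecrease : ∀ k,
    α * μ k / 2 * ‖xhat k - x k‖ ^ 2 ≤ modelDecrease f φ (G k) (x k) (xhat k)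
  pred_eq : ∀ k, pred k = modelDecrease f φ (fderiv ℝ (gradient f) (x k)) (x k) (xhat k)
  successful_iff : ∀ k, Successful k ↔
    pmin * (1 - θ) * ‖xhat k - x k‖ * min ‖resid f φ (x k)‖ (‖resid f φ (x k)‖ ^ κ) < pred k ∧
      c₁ < (f (x k) + φ (x k) - (f (xhat k) + φ (xhat k))) / pred k
  of_not_successful : ∀ k, ¬Successful k → x (k + 1) = x k ∧ ν (k + 1) = σ₂ * ν k
  of_successful : ∀ k, Successful k →
    x (k + 1) = xhat k ∧ min (ν k) νmin ≤ ν (k + 1) ∧ ν (k + 1) ≤ νbar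

namespace RegProxNewtonRun

open Asymptotics

variable {n : ℕ} {f φ : EuclideanSpace ℝ (Fin n) → ℝ} (S : RegProxNewtonRun f φ)

/-- The trial step `dᵏ = x̂ᵏ − xᵏ`. -/
def step (k : ℕ) : EuclideanSpace ℝ (Fin n) := S.xhat k - S.x k

theorem one_sub_θ_pos : 0 < 1 - S.θ := sub_pos.2 S.θ_lt_one

theorem ν_pos (k : ℕ) : 0 < S.ν k := by
  induction k with
  | zero => exact S.ν_zero_pos
  | succ k ih =>
    by_cases hk : S.Successful k
    · exact (lt_min ih S.νmin_pos).trans_le (S.of_successful k hk).2.1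
    · rw [(S.of_not_successful k hk).2]
      exact mul_pos (one_pos.trans S.one_lt_σ₂) ih

theorem le_rbar {ε : ℝ} (hε : ∀ k, ε ≤ ‖resid f φ (S.x k)‖) (k : ℕ) : ε ≤ S.rbar k := by
  induction k with
  | zero => exact S.rbar_zero ▸ hε 0
  | succ k ih =>
    rcases S.rbar_succ k with h | ⟨h, -⟩
    · exact h ▸ ih
    · exact h ▸ hε (k + 1)

theorem rbar_nonneg (k : ℕ) : 0 ≤ S.rbar k := S.le_rbar (fun _ => norm_nonneg _) k

theorem antitone_rbar : Antitone S.rbar :=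
  antitone_nat_of_succ_le fun k => (S.rbar_succ k).elim le_of_eq And.right

theorem μ_nonneg (k : ℕ) : 0 ≤ S.μ k :=
  S.μ_eq k ▸ mul_nonneg (S.ν_pos k).le (Real.rpow_nonneg (S.rbar_nonneg k) _)

theorem μ_le (k : ℕ) : S.μ k ≤ S.ν k * S.rbar 0 ^ S.δ :=
  S.μ_eq k ▸ mul_le_mul_of_nonneg_left
    (Real.rpow_le_rpow (S.rbar_nonneg k) (S.antitone_rbar k.zero_le) S.δ_nonneg) (S.ν_pos k).le

theorem ν_mul_rpow_le_μ {ε : ℝ} (hε : 0 ≤ ε) (hres : ∀ k, ε ≤ ‖resid f φ (S.x k)‖) (k : ℕ) :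
    S.ν k * ε ^ S.δ ≤ S.μ k :=
  S.μ_eq k ▸ mul_le_mul_of_nonneg_left
    (Real.rpow_le_rpow hε (S.le_rbar hres k) S.δ_nonneg) (S.ν_pos k).le

theorem modelDecrease_G_nonneg (k : ℕ) : 0 ≤ modelDecrease f φ (S.G k) (S.x k) (S.xhat k) :=
  (mul_nonneg (div_nonneg (mul_nonneg S.α_nonneg (S.μ_nonneg k)) zero_le_two)
    (sq_nonneg _)).trans (S.le_modelDecrease k)

theorem inner_G_self (k : ℕ) (v : EuclideanSpace ℝ (Fin n)) :
    ⟪v, S.G k v⟫ = ⟪v, (fderiv ℝ (gradient f) (S.x k) + S.P k) v⟫ + S.μ k * ‖v‖ ^ 2 := by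
  rw [S.G_eq, add_apply, inner_add_right, smul_apply, ContinuousLinearMap.id_apply,
    real_inner_smul_right, real_inner_self_eq_norm_sq]

theorem half_μ_mul_norm_step_sq_le_pred (k : ℕ) : 1 / 2 * S.μ k * ‖S.step k‖ ^ 2 ≤ S.pred k := by
  have hP := S.inner_P_nonneg k (S.step k)
  have hpred : S.pred k = modelDecrease f φ (S.G k) (S.x k) (S.xhat k) +
      1 / 2 * (⟪S.step k, S.P k (S.step k)⟫ + S.μ k * ‖S.step k‖ ^ 2) := by
    rw [S.pred_eq, modelDecrease_eq_add _ _ _ (S.P k), modelDecrease_eq_add _ _ _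
      (S.μ k • ContinuousLinearMap.id ℝ (EuclideanSpace ℝ (Fin n))), ← S.G_eq, smul_apply,
      ContinuousLinearMap.id_apply, real_inner_smul_right, real_inner_self_eq_norm_sq, ← step]
    ring
  linarith [S.modelDecrease_G_nonneg k]

theorem mul_norm_resid_le (hφ : ConvexOn ℝ Set.univ φ) (k : ℕ) :
    (1 - S.θ) * ‖resid f φ (S.x k)‖ ≤ (2 + ‖S.G k‖) * ‖S.step k‖ := by
  have h := norm_resid_le_norm_modelResid_add (f := f) hφ (S.G k) (S.x k) (S.xhat k)
  rw [← step] at h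
  linarith [S.norm_modelResid_le k]

theorem norm_G_le (k : ℕ) : ‖S.G k‖ ≤ ‖fderiv ℝ (gradient f) (S.x k)‖ + ‖S.P k‖ + S.μ k := by
  have hμ : ‖S.μ k • ContinuousLinearMap.id ℝ (EuclideanSpace ℝ (Fin n))‖ ≤ S.μ k := by
    rw [norm_smul, Real.norm_of_nonneg (S.μ_nonneg k)]
    exact mul_le_of_le_one_right (S.μ_nonneg k) ContinuousLinearMap.norm_id_le
  rw [S.G_eq]
  exact (norm_add_le _ _).trans (add_le_add (norm_add_le _ _) hμ)

theorem mul_norm_step_le_pred_of_le_resid {ε : ℝ} (hε : 0 ≤ ε) {k : ℕ}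
    (hres : ε ≤ ‖resid f φ (S.x k)‖)
    (hk : S.pmin * (1 - S.θ) * ‖S.step k‖ *
      min ‖resid f φ (S.x k)‖ (‖resid f φ (S.x k)‖ ^ S.κ) < S.pred k) :
    S.pmin * (1 - S.θ) * min ε (ε ^ S.κ) * ‖S.step k‖ ≤ S.pred k := by
  have hθ := S.one_sub_θ_pos
  have hp := S.pmin_pos
  have hmin : min ε (ε ^ S.κ) ≤ min ‖resid f φ (S.x k)‖ (‖resid f φ (S.x k)‖ ^ S.κ) :=
    min_le_min hres (Real.rpow_le_rpow hε hres S.κ_nonneg)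
  calc S.pmin * (1 - S.θ) * min ε (ε ^ S.κ) * ‖S.step k‖
      = S.pmin * (1 - S.θ) * ‖S.step k‖ * min ε (ε ^ S.κ) := mul_right_comm _ _ _
    _ ≤ S.pmin * (1 - S.θ) * ‖S.step k‖ *
          min ‖resid f φ (S.x k)‖ (‖resid f φ (S.x k)‖ ^ S.κ) := by gcongr
    _ ≤ S.pred k := hk.le

theorem mul_dist_le_sub {ε : ℝ} (hε : 0 ≤ ε) {k : ℕ} (hres : ε ≤ ‖resid f φ (S.x k)‖) :
    S.c₁ * (S.pmin * (1 - S.θ) * min ε (ε ^ S.κ)) * dist (S.x k) (S.x (k + 1)) ≤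
      f (S.x k) + φ (S.x k) - (f (S.x (k + 1)) + φ (S.x (k + 1))) := by
  by_cases hk : S.Successful k
  · obtain ⟨hpred, hratio⟩ := (S.successful_iff k).1 hk
    have hpred_pos : 0 < S.pred k := by
      refine lt_of_le_of_lt ?_ hpred
      have := S.one_sub_θ_pos
      have := S.pmin_pos
      positivity
    rw [lt_div_iff₀ hpred_pos] at hratio
    rw [(S.of_successful k hk).1, dist_comm, dist_eq_norm, ← step, mul_assoc]
    exact (mul_le_mul_of_nonneg_left (S.mul_norm_step_le_pred_of_le_resid hε hres hpred)
      S.c₁_pos.le).trans hratio.le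
  · simp [(S.of_not_successful k hk).1]

theorem summable_dist_of_le_resid (hF : BddBelow (Set.range fun y => f y + φ y)) {ε : ℝ}
    (hε : 0 < ε) (hres : ∀ k, ε ≤ ‖resid f φ (S.x k)‖) :
    Summable fun k => dist (S.x k) (S.x (k + 1)) :=
  summable_dist_of_mul_dist_le_sub
    (mul_pos S.c₁_pos (mul_pos (mul_pos S.pmin_pos S.one_sub_θ_pos)
      (lt_min hε (Real.rpow_pos_of_pos hε _))))
    (hF.mono (Set.range_comp_subset_range S.x fun y => f y + φ y))
    fun k => S.mul_dist_le_sub hε.le (hres k)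

section Limit

variable {l : Filter ℕ} {x₀ : EuclideanSpace ℝ (Fin n)}

theorem exists_eventually_norm_G_le (hf : ContDiff ℝ 2 f) (hx : Tendsto S.x l (𝓝 x₀)) :
    ∃ C, ∀ᶠ k in l, ‖S.G k‖ ≤ C + S.μ k := by
  obtain ⟨g, hg, hPg⟩ := S.exists_continuous_norm_P_le
  have hlim := (((continuous_fderiv_gradient hf).norm.add hg).tendsto x₀).comp hx
  refine ⟨‖fderiv ℝ (gradient f) x₀‖ + g x₀ + 1, ?_⟩
  filter_upwards [hlim.eventually (gt_mem_nhds (lt_add_one _))] with k hk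
  simp only [Function.comp_apply, Pi.add_apply] at hk
  linarith [S.norm_G_le k, hPg k]

theorem exists_eventually_mul_norm_resid_le (hf : ContDiff ℝ 2 f) (hφ : ConvexOn ℝ Set.univ φ)
    (hx : Tendsto S.x l (𝓝 x₀)) :
    ∃ C, ∀ᶠ k in l, (1 - S.θ) * ‖resid f φ (S.x k)‖ ≤ (C + S.μ k) * ‖S.step k‖ := by
  obtain ⟨C, hC⟩ := S.exists_eventually_norm_G_le hf hx
  refine ⟨2 + C, hC.mono fun k hk => (S.mul_norm_resid_le hφ k).trans ?_⟩
  rw [add_assoc]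
  gcongr

theorem exists_eventually_μ_mul_norm_step_le (hf : ContDiff ℝ 2 f) (hφ : ConvexOn ℝ Set.univ φ)
    (hx : Tendsto S.x l (𝓝 x₀)) : ∃ C, ∀ᶠ k in l, S.μ k * ‖S.step k‖ ≤ C := by
  obtain ⟨L, hL⟩ := exists_eventually_sub_le_mul_norm_of_convexOn hφ x₀
  have hgrad := (((continuous_gradient hf).norm).tendsto x₀).comp hx
  refine ⟨2 * (|L| + (‖gradient f x₀‖ + 1)), ?_⟩
  filter_upwards [hx.eventually hL, hgrad.eventually (gt_mem_nhds (lt_add_one _))] with k hLk hgk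
  simp only [Function.comp_apply] at hgk
  have hquad : S.μ k * ‖S.step k‖ ^ 2 ≤ ⟪S.step k, S.G k (S.step k)⟫ := by
    rw [inner_G_self]
    exact le_add_of_nonneg_left (S.inner_hessian_add_P_nonneg k _)
  have hdecr : 0 ≤ φ (S.x k) - φ (S.xhat k) - ⟪gradient f (S.x k), S.step k⟫ -
      1 / 2 * ⟪S.step k, S.G k (S.step k)⟫ := S.modelDecrease_G_nonneg k
  have hφk : φ (S.x k) - φ (S.xhat k) ≤ |L| * ‖S.step k‖ :=
    (hLk _).trans (mul_le_mul_of_nonneg_right (le_abs_self L) (norm_nonneg _))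
  have hinner : -⟪gradient f (S.x k), S.step k⟫ ≤ (‖gradient f x₀‖ + 1) * ‖S.step k‖ :=
    (neg_le_abs _).trans ((abs_real_inner_le_norm _ _).trans (by gcongr))
  rcases (norm_nonneg (S.step k)).eq_or_lt with h | h
  · rw [← h, mul_zero]
    positivity
  · refine le_of_mul_le_mul_right ?_ h
    linarith

variable (hμ : Tendsto S.μ l atTop)
include hμ

theorem tendsto_step_zero (hf : ContDiff ℝ 2 f) (hφ : ConvexOn ℝ Set.univ φ)
    (hx : Tendsto S.x l (𝓝 x₀)) : Tendsto S.step l (𝓝 0) := by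
  obtain ⟨C, hC⟩ := S.exists_eventually_μ_mul_norm_step_le hf hφ hx
  refine squeeze_zero_norm' ?_ (hμ.const_div_atTop C)
  filter_upwards [hC, hμ.eventually_gt_atTop 0] with k hk hμk
  rwa [le_div_iff₀' hμk]

theorem eventually_lt_pred (hf : ContDiff ℝ 2 f) (hφ : ConvexOn ℝ Set.univ φ)
    (hx : Tendsto S.x l (𝓝 x₀)) (hres : ∀ k, resid f φ (S.x k) ≠ 0) :
    ∀ᶠ k in l, S.pmin * (1 - S.θ) * ‖S.step k‖ *
      min ‖resid f φ (S.x k)‖ (‖resid f φ (S.x k)‖ ^ S.κ) < S.pred k := by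
  obtain ⟨C, hC⟩ := S.exists_eventually_mul_norm_resid_le hf hφ hx
  have hp := S.pmin_pos
  have hp' : 0 < 1 - 2 * S.pmin := by linarith [S.pmin_lt_half]
  filter_upwards [hC, hμ.eventually_gt_atTop (2 * S.pmin * C / (1 - 2 * S.pmin))] with k hk hμk
  have hθ := S.one_sub_θ_pos
  have hstep : 0 < ‖S.step k‖ := by
    refine (norm_nonneg _).lt_of_ne' fun h => ?_
    rw [h, mul_zero] at hk
    exact hk.not_gt (mul_pos hθ (norm_pos_iff.2 (hres k)))
  rw [div_lt_iff₀ hp'] at hμk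
  calc S.pmin * (1 - S.θ) * ‖S.step k‖ * min ‖resid f φ (S.x k)‖ (‖resid f φ (S.x k)‖ ^ S.κ)
      ≤ S.pmin * (1 - S.θ) * ‖S.step k‖ * ‖resid f φ (S.x k)‖ := by
        gcongr
        exact min_le_left _ _
    _ = S.pmin * ‖S.step k‖ * ((1 - S.θ) * ‖resid f φ (S.x k)‖) := by ring
    _ ≤ S.pmin * ‖S.step k‖ * ((C + S.μ k) * ‖S.step k‖) := by gcongr
    _ = S.pmin * (C + S.μ k) * ‖S.step k‖ ^ 2 := by ring
    _ < 1 / 2 * S.μ k * ‖S.step k‖ ^ 2 :=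
        mul_lt_mul_of_pos_right (by linarith) (pow_pos hstep 2)
    _ ≤ S.pred k := S.half_μ_mul_norm_step_sq_le_pred k

theorem eventually_successful (hf : ContDiff ℝ 2 f) (hφ : ConvexOn ℝ Set.univ φ)
    (hx : Tendsto S.x l (𝓝 x₀)) {ε : ℝ} (hε : 0 < ε) (hres : ∀ k, ε ≤ ‖resid f φ (S.x k)‖) :
    ∀ᶠ k in l, S.Successful k := by
  have hlt := S.eventually_lt_pred hμ hf hφ hx fun k => norm_pos_iff.1 (hε.trans_le (hres k))
  have hxhat : Tendsto S.xhat l (𝓝 x₀) := by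
    simpa [step] using hx.add (S.tendsto_step_zero hμ hf hφ hx)
  set w := S.pmin * (1 - S.θ) * min ε (ε ^ S.κ)
  have hw : 0 < w := mul_pos (mul_pos S.pmin_pos S.one_sub_θ_pos)
    (lt_min hε (Real.rpow_pos_of_pos hε _))
  have hc : 0 < (1 - S.c₁) * w := mul_pos (sub_pos.2 S.c₁_lt_one) hw
  filter_upwards [hlt, (isLittleO_sub_modelDecrease hf φ hx hxhat).bound (half_pos hc)]
    with k hk hgap
  have hstep : w * ‖S.step k‖ ≤ S.pred k := S.mul_norm_step_le_pred_of_le_resid hε.le (hres k) hk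
  have hpred_pos : 0 < S.pred k := by
    have := S.one_sub_θ_pos
    have := S.pmin_pos
    exact lt_of_le_of_lt (by positivity) hk
  rw [← S.pred_eq, ← step, Real.norm_eq_abs] at hgap
  refine (S.successful_iff k).2 ⟨hk, (lt_div_iff₀ hpred_pos).2 ?_⟩
  have hgap' : -((1 - S.c₁) / 2 * (w * ‖S.step k‖)) ≤
      f (S.x k) + φ (S.x k) - (f (S.xhat k) + φ (S.xhat k)) - S.pred k := by
    linarith [(abs_le.1 hgap).1]
  have hc₁ : 0 < 1 - S.c₁ := sub_pos.2 S.c₁_lt_one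
  linarith [mul_le_mul_of_nonneg_left hstep hc₁.le, mul_pos hc₁ hpred_pos]

end Limit

theorem exists_eventually_ν_le (hf : ContDiff ℝ 2 f) (hφ : ConvexOn ℝ Set.univ φ)
    {x₀ : EuclideanSpace ℝ (Fin n)} (hx : Tendsto S.x atTop (𝓝 x₀)) {ε : ℝ} (hε : 0 < ε)
    (hres : ∀ k, ε ≤ ‖resid f φ (S.x k)‖) : ∃ B, ∀ᶠ k in atTop, S.ν k ≤ B := by
  have hsucc : ∀ᶠ k in atTop ⊓ comap S.μ atTop, S.Successful k :=
    S.eventually_successful (tendsto_comap.mono_left inf_le_right) hf hφ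
      (hx.mono_left inf_le_left) hε hres
  obtain ⟨M, hM⟩ : ∃ M, ∀ᶠ k in atTop, M ≤ S.μ k → S.Successful k := by
    obtain ⟨s, hs, t, ⟨u, hu, hut⟩, hst⟩ := eventually_inf.1 hsucc
    obtain ⟨M, hM⟩ := mem_atTop_sets.1 hu
    exact ⟨M, mem_of_superset hs fun k hk hμk => hst k ⟨hk, hut (hM _ hμk)⟩⟩
  have hεδ : 0 < ε ^ S.δ := Real.rpow_pos_of_pos hε _
  refine ⟨max S.νbar (S.σ₂ * (M / ε ^ S.δ)), ?_⟩
  rw [← map_add_atTop_eq_nat 1, eventually_map]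
  filter_upwards [hM] with k hk
  by_cases hsk : S.Successful k
  · exact le_max_of_le_left (S.of_successful k hsk).2.2
  · have hμk : S.μ k < M := not_le.1 (mt hk hsk)
    rw [(S.of_not_successful k hsk).2]
    refine le_max_of_le_right (mul_le_mul_of_nonneg_left ?_ (one_pos.trans S.one_lt_σ₂).le)
    exact (le_div_iff₀ hεδ).2 ((S.ν_mul_rpow_le_μ hε.le hres k).trans hμk.le)

theorem exists_pos_eventually_le_norm_step (hf : ContDiff ℝ 2 f) (hφ : ConvexOn ℝ Set.univ φ)
    {x₀ : EuclideanSpace ℝ (Fin n)} (hx : Tendsto S.x atTop (𝓝 x₀)) {ε : ℝ} (hε : 0 < ε)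
    (hres : ∀ k, ε ≤ ‖resid f φ (S.x k)‖) : ∃ γ > 0, ∀ᶠ k in atTop, γ ≤ ‖S.step k‖ := by
  obtain ⟨C, hC⟩ := S.exists_eventually_mul_norm_resid_le hf hφ hx
  obtain ⟨B, hB⟩ := S.exists_eventually_ν_le hf hφ hx hε hres
  have hrbar : 0 ≤ S.rbar 0 ^ S.δ := Real.rpow_nonneg (S.rbar_nonneg 0) _
  set D := |C| + |B| * S.rbar 0 ^ S.δ + 1
  have hD : 0 < D := by positivity
  have hθ := S.one_sub_θ_pos
  refine ⟨(1 - S.θ) * ε / D, by positivity, ?_⟩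
  filter_upwards [hC, hB] with k hCk hBk
  have hμk : S.μ k ≤ |B| * S.rbar 0 ^ S.δ :=
    (S.μ_le k).trans (mul_le_mul_of_nonneg_right (hBk.trans (le_abs_self B)) hrbar)
  rw [div_le_iff₀' hD]
  calc (1 - S.θ) * ε ≤ (1 - S.θ) * ‖resid f φ (S.x k)‖ := by gcongr; exact hres k
    _ ≤ (C + S.μ k) * ‖S.step k‖ := hCk
    _ ≤ D * ‖S.step k‖ := by
        gcongr
        linarith [le_abs_self C]

theorem frequently_successful {B : ℝ} (hB : ∀ᶠ k in atTop, S.ν k ≤ B) :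
    ∃ᶠ k in atTop, S.Successful k := by
  intro hfail
  have hν : Tendsto S.ν atTop atTop :=
    tendsto_atTop_of_eventually_mul_le S.one_lt_σ₂ S.ν_pos
      (hfail.mono fun k hk => (S.of_not_successful k hk).2.ge)
  obtain ⟨k, hk, hk'⟩ := (hB.and (hν.eventually_gt_atTop B)).exists
  exact hk.not_gt hk'

theorem not_forall_le_norm_resid (hf : ContDiff ℝ 2 f) (hφ : ConvexOn ℝ Set.univ φ)
    (hF : BddBelow (Set.range fun y => f y + φ y)) {ε : ℝ} (hε : 0 < ε) :
    ¬∀ k, ε ≤ ‖resid f φ (S.x k)‖ := by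
  intro hres
  have hcauchy := cauchySeq_of_summable_dist (S.summable_dist_of_le_resid hF hε hres)
  obtain ⟨x₀, hx⟩ := cauchySeq_tendsto_of_complete hcauchy
  obtain ⟨B, hB⟩ := S.exists_eventually_ν_le hf hφ hx hε hres
  obtain ⟨γ, hγ, hstep⟩ := S.exists_pos_eventually_le_norm_step hf hφ hx hε hres
  have hmove : Tendsto (fun k => dist (S.x (k + 1)) (S.x k)) atTop (𝓝 0) :=
    dist_self x₀ ▸ ((tendsto_add_atTop_iff_nat 1).2 hx).dist hx
  obtain ⟨k, hk, hγk, hdist⟩ := ((S.frequently_successful hB).and_eventually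
    (hstep.and (hmove.eventually_lt_const hγ))).exists
  rw [(S.of_successful k hk).1, dist_eq_norm, ← step] at hdist
  exact hγk.not_gt hdist

theorem frequently_norm_resid_lt (hf : ContDiff ℝ 2 f) (hφ : ConvexOn ℝ Set.univ φ)
    (hF : BddBelow (Set.range fun y => f y + φ y)) (hres : ∀ k, resid f φ (S.x k) ≠ 0)
    {ε : ℝ} (hε : 0 < ε) : ∃ᶠ k in atTop, ‖resid f φ (S.x k)‖ < ε := by
  intro hge
  obtain ⟨ε', hε', hle⟩ := exists_pos_forall_le_of_eventually_le
    (fun k => norm_pos_iff.2 (hres k)) hε (hge.mono fun k => not_lt.1)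
  exact S.not_forall_le_norm_resid hf hφ hF hε' hle

end RegProxNewtonRun

theorem stmt_8_general {n : ℕ} {f φ : EuclideanSpace ℝ (Fin n) → ℝ} (S : RegProxNewtonRun f φ)
    (hf : ContDiff ℝ 2 f) (hφ : ConvexOn ℝ Set.univ φ)
    (hF : BddBelow (Set.range fun y => f y + φ y)) (hres : ∀ k, resid f φ (S.x k) ≠ 0) :
    liminf (fun k => ‖resid f φ (S.x k)‖) atTop = 0 :=
  liminf_eq_zero_of_frequently_lt (fun _ => norm_nonneg _) fun _ hε =>
    S.frequently_norm_resid_lt hf hφ hF hres hε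

/-- Theorem 4.5 (global convergence): the sequence `{xᵏ}` generated by the regularized
proximal Newton method without line search satisfies `liminf_{k→∞} ‖r(xᵏ)‖ = 0`. -/
theorem stmt_8 {n m : ℕ}
    -- problem data: f(x) = ψ(Ax − b), F = f + φ bounded below, φ convex, ψ C²
    (ψ : EuclideanSpace ℝ (Fin m) → ℝ)
    (A : EuclideanSpace ℝ (Fin n) →L[ℝ] EuclideanSpace ℝ (Fin m))
    (b : EuclideanSpace ℝ (Fin m))
    (φ : EuclideanSpace ℝ (Fin n) → ℝ)
    (hψ : ContDiff ℝ 2 ψ) (hφ : ConvexOn ℝ Set.univ φ)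
    (f F : EuclideanSpace ℝ (Fin n) → ℝ)
    (hf : ∀ y, f y = ψ (A y - b)) (hF : ∀ y, F y = f y + φ y)
    (hFbdd : BddBelow (Set.range F))
    -- algorithm parameters
    (c₁ c₂ σ₁ σ₂ η θ α a νmin ν₀ νbar δ τ pmin κ : ℝ)
    (hc₁ : 0 < c₁) (hc₁' : c₁ < 1) (hc₂ : c₁ < c₂) (hc₂' : c₂ < 1)
    (hσ₁ : 0 < σ₁) (hσ₁' : σ₁ < 1) (hσ₂ : 1 < σ₂)
    (hη : 0 < η) (hη' : η < 1) (hθ : 0 < θ) (hθ' : θ < 1)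
    (hα : 0 < α) (hα' : α < 1) (ha : 1 ≤ a)
    (hνmin : 0 < νmin) (hν₀a : νmin ≤ ν₀) (hν₀b : ν₀ ≤ νbar)
    (hδ0 : 0 < δ) (hδ1 : δ ≤ 1) (hτ : δ ≤ τ)
    (hpmin : 0 < pmin) (hpmin' : pmin < 1 / 2) (hκ : 1 + δ < κ)
    -- iterates and regularization sequences
    (x xhat : ℕ → EuclideanSpace ℝ (Fin n)) (ν rbar μ : ℕ → ℝ)
    (hν0 : ν 0 = ν₀) (hrbar0 : rbar 0 = ‖resid f φ (x 0)‖)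
    (hμ : ∀ k, μ k = ν k * rbar k ^ δ)
    -- Λ_k, H_k + μ_k I =: G_k, the models q_k, q̂_k, and the subproblem residual R_k
    (Λ : ℕ → ℝ)
    (hΛ : ∀ k, Λ k = a * max (-(lambdaMin (fderiv ℝ (gradient ψ) (A (x k) - b)))) 0)
    (G : ℕ → EuclideanSpace ℝ (Fin n) →L[ℝ] EuclideanSpace ℝ (Fin n))
    (hG : ∀ k, G k = fderiv ℝ (gradient f) (x k)
        + Λ k • ((ContinuousLinearMap.adjoint A).comp A)
        + μ k • ContinuousLinearMap.id ℝ (EuclideanSpace ℝ (Fin n)))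
    (q qhat : ℕ → EuclideanSpace ℝ (Fin n) → ℝ)
    (hq : ∀ k y, q k y = f (x k) + ⟪gradient f (x k), y - x k⟫
        + (1 / 2) * ⟪y - x k, (fderiv ℝ (gradient f) (x k)) (y - x k)⟫ + φ y)
    (hqhat : ∀ k y, qhat k y = f (x k) + ⟪gradient f (x k), y - x k⟫
        + (1 / 2) * ⟪y - x k, (G k) (y - x k)⟫ + φ y)
    (R : ℕ → EuclideanSpace ℝ (Fin n) → EuclideanSpace ℝ (Fin n))
    (hR : ∀ k y, R k y = y - proxPt φ (y - gradient f (x k) - (G k) (y - x k)))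
    -- the inexactness criteria satisfied by x̂ᵏ
    (hinex1 : ∀ k, ‖R k (xhat k)‖ ≤
        θ * min ‖resid f φ (x k)‖ (‖resid f φ (x k)‖ ^ (1 + τ)))
    (hinex2 : ∀ k, α * μ k / 2 * ‖xhat k - x k‖ ^ 2 ≤ F (x k) - qhat k (xhat k))
    -- dᵏ, pred_k, ared_k, ρ_k
    (d : ℕ → EuclideanSpace ℝ (Fin n)) (hd : ∀ k, d k = xhat k - x k)
    (pred ared ρ : ℕ → ℝ)
    (hpred : ∀ k, pred k = F (x k) - q k (xhat k))
    (hared : ∀ k, ared k = F (x k) - F (xhat k))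
    (hρ : ∀ k, ρ k = ared k / pred k)
    -- update rules (unsuccessful / successful / highly successful iterations)
    (unsucc : ℕ → Prop)
    (hunsucc : ∀ k, unsucc k ↔
        pred k ≤ pmin * (1 - θ) * ‖d k‖ *
          min ‖resid f φ (x k)‖ (‖resid f φ (x k)‖ ^ κ) ∨ ρ k ≤ c₁)
    (hupd : ∀ k,
        (unsucc k → x (k + 1) = x k ∧ ν (k + 1) = σ₂ * ν k) ∧
        (¬unsucc k → x (k + 1) = xhat k ∧
          (ρ k ≤ c₂ → ν (k + 1) = min (ν k) νbar) ∧
          (c₂ < ρ k → ν (k + 1) = min (max (σ₁ * ν k) νmin) νbar)))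
    (hrbarupd : ∀ k,
        (‖resid f φ (x (k + 1))‖ ≤ η * rbar k → rbar (k + 1) = ‖resid f φ (x (k + 1))‖) ∧
        (¬‖resid f φ (x (k + 1))‖ ≤ η * rbar k → rbar (k + 1) = rbar k))
    -- no iterate is stationary (otherwise the algorithm terminates)
    (hrne : ∀ k, resid f φ (x k) ≠ 0)
    :
    Filter.liminf (fun k => ‖resid f φ (x k)‖) atTop = 0 := by
  obtain rfl : f = fun y => ψ (A y - b) := funext hf
  have hA : ContDiff ℝ 2 fun y => ψ (A y - b) := hψ.comp (A.contDiff.sub contDiff_const)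
  have ha0 : 0 ≤ a := zero_le_one.trans ha
  have hΛ0 : ∀ k, 0 ≤ Λ k := fun k => hΛ k ▸ mul_nonneg ha0 (le_max_right _ _)
  have hΛmin : ∀ k, -lambdaMin (fderiv ℝ (gradient ψ) (A (x k) - b)) ≤ Λ k := fun k =>
    hΛ k ▸ (le_max_left _ 0).trans (le_mul_of_one_le_left (le_max_right _ _) ha)
  let S : RegProxNewtonRun (fun y => ψ (A y - b)) φ :=
    { c₁, σ₂, θ, α, νmin, νbar, δ, pmin, κ, x, xhat, ν, rbar, μ, pred, G
      P := fun k => Λ k • (ContinuousLinearMap.adjoint A).comp A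
      Successful := fun k => ¬unsucc k
      c₁_pos := hc₁, c₁_lt_one := hc₁', one_lt_σ₂ := hσ₂, θ_lt_one := hθ', α_nonneg := hα.le
      νmin_pos := hνmin, δ_nonneg := hδ0.le, pmin_pos := hpmin, pmin_lt_half := hpmin'
      κ_nonneg := by linarith
      ν_zero_pos := hν0 ▸ hνmin.trans_le hν₀a
      rbar_zero := hrbar0
      rbar_succ := fun k => eq_or_eq_and_le_of_update hη hη'.le (norm_nonneg _) (hrbarupd k)
      μ_eq := hμ, G_eq := hG
      inner_P_nonneg := fun k v =>
        inner_smul_adjoint_comp_self A (Λ k) v ▸ mul_nonneg (hΛ0 k) (sq_nonneg _)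
      inner_hessian_add_P_nonneg := fun k v =>
        fderiv_gradient_comp_sub hψ A b (x k) ▸ inner_adjoint_comp_add_smul_nonneg _ A (hΛmin k) v
      exists_continuous_norm_P_le :=
        let ⟨g, hg, hle⟩ := exists_continuous_norm_smul_adjoint_comp_self_le hψ A b ha0
        ⟨g, hg, fun k => hΛ k ▸ hle (x k)⟩
      norm_modelResid_le := fun k => by
        rw [modelResid, ← hR]
        exact (hinex1 k).trans (mul_le_mul_of_nonneg_left (min_le_left _ _) hθ.le)
      le_modelDecrease := fun k => (hinex2 k).trans_eq <| by rw [hF, hqhat, modelDecrease]; ring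
      pred_eq := fun k => by rw [hpred, hF, hq, modelDecrease]; ring
      successful_iff := fun k => by rw [hunsucc, not_or, not_le, not_le, hd, hρ, hared, hF, hF]
      of_not_successful := fun k hk => (hupd k).1 (not_not.1 hk)
      of_successful := fun k hk =>
        ⟨((hupd k).2 hk).1, min_le_and_le_of_update (hν₀a.trans hν₀b) ((hupd k).2 hk).2⟩ }
  exact stmt_8_general S hA hφ (funext hF ▸ hFbdd) hrne
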